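/- Let R be a Cohen-Macaulay commutative noetherian local ring with maximal ideal m. If the ideal ⋂ Ann_R Ext_R^i(M,N), where the intersection ranges over all integers i > 0 and all modules M, N in CM_0(R), is m-primary (i.e., its radical equals m), then R is an isolated singularity, that is, R_p is a regular local ring for every nonmaximal prime ideal p of R. -/

import Mathlib

open CategoryTheory IsLocalRing

noncomputable section

/-- The `i`-th Tor module of two `R`-modules, as an object of `ModuleCat R`. -/
def TorMod (R : Type) [CommRing R] (i : ℕ) (M N : ModuleCat.{0} R) : ModuleCat.{0} R :=
  ((Tor (ModuleCat.{0} R) i).obj M).obj N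

/-- The `i`-th Ext module of two `R`-modules, as an object of `ModuleCat R`. -/
def ExtMod (R : Type) [CommRing R] (i : ℕ) (M N : ModuleCat.{0} R) : ModuleCat.{0} R :=
  ((Ext R (ModuleCat.{0} R) i).obj (Opposite.op M)).obj N

/-- Integer-indexed Tor: `Tor_n = 0` for `n < 0`. -/
def TorZ (R : Type) [CommRing R] (n : ℤ) (M N : ModuleCat.{0} R) : ModuleCat.{0} R :=
  if 0 ≤ n then TorMod R n.toNat M N else ModuleCat.of R PUnit

/-- Integer-indexed Ext: `Ext^n = 0` for `n < 0`. -/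
def ExtZ (R : Type) [CommRing R] (n : ℤ) (M N : ModuleCat.{0} R) : ModuleCat.{0} R :=
  if 0 ≤ n then ExtMod R n.toNat M N else ModuleCat.of R PUnit

/-- The depth of a module `N` over a local ring `S`, defined as the infimum of the set of
integers `i` such that `Ext^i(k, N) ≠ 0`, where `k` is the residue field of `S`
(`⊤` if no such `i` exists). -/
def moduleDepth (S : Type) [CommRing S] [IsLocalRing S] (N : Type) [AddCommGroup N]
    [Module S N] : ℕ∞ :=
  sInf {i : ℕ∞ | ∃ j : ℕ, i = (j : ℕ∞) ∧
    Nontrivial (ExtMod S j (ModuleCat.of S (ResidueField S)) (ModuleCat.of S N))}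

/-- A local ring is regular if it is noetherian and its maximal ideal can be generated by
(Krull dimension of `S`)-many elements. -/
def IsRegularLocal (S : Type) [CommRing S] [IsLocalRing S] : Prop :=
  IsNoetherianRing S ∧ ∃ s : Finset S, Ideal.span (s : Set S) = maximalIdeal S ∧
    (s.card : WithBot ℕ∞) = ringKrullDim S

/-- A local ring is Cohen-Macaulay if its depth (as a module over itself) equals its
Krull dimension. -/
def IsCMLocalRing (R : Type) [CommRing R] [IsLocalRing R] : Prop :=
  (moduleDepth R R : WithBot ℕ∞) = ringKrullDim R

/-- A module `M` over a local ring `R` is maximal Cohen-Macaulay if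
`depth M_p ≥ dim R_p` for every prime ideal `p` of `R`. -/
def IsMCMModule (R : Type) [CommRing R] [IsLocalRing R] (M : Type) [AddCommGroup M]
    [Module R M] : Prop :=
  ∀ (p : Ideal R) [p.IsPrime],
    ringKrullDim (Localization.AtPrime p) ≤
      (moduleDepth (Localization.AtPrime p) (LocalizedModule p.primeCompl M) : WithBot ℕ∞)

/-- Membership in `CM(R)`: finitely generated maximal Cohen-Macaulay modules. -/
def MemCM (R : Type) [CommRing R] [IsLocalRing R] (M : ModuleCat.{0} R) : Prop :=
  Module.Finite R M ∧ IsMCMModule R M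

/-- Membership in `CM₀(R)`: finitely generated maximal Cohen-Macaulay modules that are
locally free on the punctured spectrum. -/
def MemCM0 (R : Type) [CommRing R] [IsLocalRing R] (M : ModuleCat.{0} R) : Prop :=
  Module.Finite R M ∧ IsMCMModule R M ∧
    ∀ (p : Ideal R) [p.IsPrime], p ≠ maximalIdeal R →
      Module.Free (Localization.AtPrime p) (LocalizedModule p.primeCompl M)

/-- The singular locus of `R`: primes `p` such that `R_p` is not regular. -/
def singularLocus (R : Type) [CommRing R] : Set (PrimeSpectrum R) :=
  {p | ¬ IsRegularLocal (Localization.AtPrime p.asIdeal)}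

/-- The nonfree locus of a module `M`: primes `p` such that `M_p` is not a free
`R_p`-module. -/
def nonfreeLocus (R : Type) [CommRing R] (M : Type) [AddCommGroup M] [Module R M] :
    Set (PrimeSpectrum R) :=
  {p | ¬ Module.Free (Localization.AtPrime p.asIdeal)
        (LocalizedModule p.asIdeal.primeCompl M)}

/-- `K` is a first syzygy of `N` in a minimal free resolution: there is a surjection
`f : R^n → N` with `ker f ⊆ m·R^n` and `K ≅ ker f`. -/
def IsMinimalSyzygy1 (R : Type) [CommRing R] [IsLocalRing R] (N K : ModuleCat.{0} R) : Prop :=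
  ∃ (n : ℕ) (f : (Fin n → R) →ₗ[R] N), Function.Surjective f ∧
    LinearMap.ker f ≤ (maximalIdeal R) • (⊤ : Submodule R (Fin n → R)) ∧
    Nonempty (K ≃ₗ[R] LinearMap.ker f)

/-- `K` is a `d`-th syzygy of `N` in a minimal free resolution. -/
def IsMinimalSyzygy (R : Type) [CommRing R] [IsLocalRing R] :
    ℕ → ModuleCat.{0} R → ModuleCat.{0} R → Prop
  | 0, N, K => Nonempty ((K : Type) ≃ₗ[R] N)
  | d + 1, N, K => ∃ L : ModuleCat.{0} R, IsMinimalSyzygy1 R N L ∧ IsMinimalSyzygy R d L K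

/-- A module is indecomposable if it is nonzero and is not isomorphic to the direct sum of
two nonzero modules. -/
def IndecomposableModule (R : Type) [CommRing R] (M : Type) [AddCommGroup M] [Module R M] :
    Prop :=
  Nontrivial M ∧ ∀ (A B : Type) [AddCommGroup A] [Module R A] [AddCommGroup B] [Module R B],
    Nonempty (M ≃ₗ[R] A × B) → (Subsingleton A ∨ Subsingleton B)

/-!
Suppose `a` annihilates `Ext¹(M, N)` for all `M, N ∈ CM₀(R)`. Taking for `N` a syzygy `ΩM`, the
multiplication `a : M → M` factors through a free module, so `a` annihilates `Tor₁(M, -)`. Let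
`d = dim R` and let `p` be a prime ideal. As `R/(p + mⁿ)` has finite length, the syzygy
`Ωᵈ(R/(p + mⁿ))` lies in `CM₀(R)`; hence `a` annihilates
`Tor₁(Ωᵈ(R/(p + mⁿ)), R/p) ≅ Tor₁(R/(p + mⁿ), Ωᵈ(R/p))` for every `n`. By Krull's intersection
theorem the bound survives the limit `n → ∞`, so if `a ∉ p`, then `Tor₁(κ(p), Ωᵈ(R/p)_p)` vanishes
and `Ωᵈ(R/p)_p` is free. Thus the residue field of `R_p` has finite
projective dimension, and `R_p` is regular by the theorem of Auslander, Buchsbaum and Serre.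
-/

universe u

theorem mem_annihilator_homology_iff {R : Type u} [CommRing R] (S : ShortComplex (ModuleCat.{u} R))
    (r : R) :
    r ∈ Module.annihilator R S.homology ↔ ∀ x : S.X₂, S.g x = 0 → ∃ y, S.f y = r • x := by
  rw [S.moduleCatHomologyIso.toLinearEquiv.annihilator_eq, Module.mem_annihilator]
  constructor
  · intro h x hx
    have hrx : Submodule.Quotient.mk (p := LinearMap.range S.moduleCatToCycles) (r • ⟨x, hx⟩) = 0 :=
      h (Submodule.Quotient.mk ⟨x, hx⟩)
    obtain ⟨y, hy⟩ := (Submodule.Quotient.mk_eq_zero _).mp hrx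
    exact ⟨y, congrArg Subtype.val hy⟩
  · intro h m
    obtain ⟨⟨x, hx⟩, rfl⟩ := Submodule.Quotient.mk_surjective _ m
    obtain ⟨y, hy⟩ := h x hx
    exact (Submodule.Quotient.mk_eq_zero (LinearMap.range S.moduleCatToCycles)).mpr
      ⟨y, Subtype.ext hy⟩

section ExtComparison

variable {R : Type} [CommRing R] (M N : ModuleCat.{0} R)

theorem annihilator_extMod_eq (P : ProjectiveResolution M) (i j k : ℕ)
    (hi : (ComplexShape.up ℕ).prev j = i) (hk : (ComplexShape.up ℕ).next j = k) :
    Module.annihilator R (ExtMod R j M N) =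
      Module.annihilator R ((P.complex.linearYonedaObj R N).sc' i j k).homology := by
  subst hi hk
  exact (P.isoExt (R := R) j N).toLinearEquiv.annihilator_eq

theorem mem_annihilator_extMod_zero_iff (r : R) :
    r ∈ Module.annihilator R (ExtMod R 0 M N) ↔ ∀ f : M ⟶ N, r • f = 0 := by
  obtain ⟨P⟩ := HasProjectiveResolution.out (Z := M)
  rw [annihilator_extMod_eq M N P 0 0 1 (by simp) (by simp), mem_annihilator_homology_iff]
  have hd : (P.complex.linearYonedaObj R N).d 0 0 = 0 :=
    (P.complex.linearYonedaObj R N).shape _ _ (by simp)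
  have hcocycle : (∀ x : P.complex.X 0 ⟶ N, P.complex.d 1 0 ≫ x = 0 → r • x = 0) ↔
      ∀ f : M ⟶ N, r • f = 0 := by
    constructor
    · intro h (f : ((ChainComplex.single₀ (ModuleCat R)).obj M).X 0 ⟶ N)
      have hf := h (P.π.f 0 ≫ f) (by
        rw [← Category.assoc, P.complex_d_comp_π_f_zero, Limits.zero_comp])
      rw [← Linear.comp_smul] at hf
      exact (cancel_epi (P.π.f 0)).mp (hf.trans Limits.comp_zero.symm)
    · intro h x hx
      obtain ⟨f, rfl⟩ := P.exact₀.desc' x hx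
      rw [← Linear.comp_smul]
      exact (congrArg _ (h f)).trans Limits.comp_zero
  rw [← hcocycle]
  refine forall₂_congr fun x _ => ⟨?_, fun hx => ⟨0, (map_zero _).trans hx.symm⟩⟩
  rintro ⟨y, hy⟩
  exact hy.symm.trans (congrArg (fun f => f.hom y) hd)

theorem mem_annihilator_extMod_succ_iff (P : ProjectiveResolution M) (r : R) (n : ℕ) :
    r ∈ Module.annihilator R (ExtMod R (n + 1) M N) ↔
      ∀ f : P.complex.X (n + 1) ⟶ N, P.complex.d (n + 2) (n + 1) ≫ f = 0 →
        ∃ g : P.complex.X n ⟶ N, P.complex.d (n + 1) n ≫ g = r • f := by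
  rw [annihilator_extMod_eq M N P n (n + 1) (n + 2) (by simp) (by simp),
    mem_annihilator_homology_iff]
  rfl

theorem mem_annihilator_extMod_iff (r : R) (n : ℕ) :
    r ∈ Module.annihilator R (ExtMod R n M N) ↔ ∀ e : Abelian.Ext M N n, r • e = 0 := by
  cases n with
  | zero =>
    rw [mem_annihilator_extMod_zero_iff]
    refine ((Abelian.Ext.linearEquiv₀ (R := R)).toEquiv.forall_congr fun e => ?_).symm
    simp [← map_smul]
  | succ n =>
    obtain ⟨P⟩ := HasProjectiveResolution.out (Z := M)
    rw [mem_annihilator_extMod_succ_iff M N P]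
    have hd (f : P.complex.X (n + 1) ⟶ N) (hf : P.complex.d (n + 2) (n + 1) ≫ f = 0) :
        P.complex.d (n + 2) (n + 1) ≫ (r • f) = 0 := by
      rw [Linear.comp_smul, hf, smul_zero]
    have hsmul (f : P.complex.X (n + 1) ⟶ N) (hf : P.complex.d (n + 2) (n + 1) ≫ f = 0) :
        r • P.extMk f (n + 2) rfl hf = P.extMk (r • f) (n + 2) rfl (hd f hf) := by
      simp [Abelian.Ext.smul_eq_comp_mk₀, P.extMk_comp_mk₀]
    constructor
    · intro h e
      obtain ⟨f, hf, rfl⟩ := P.extMk_surjective e (n + 2) rfl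
      rw [hsmul, P.extMk_eq_zero_iff _ _ rfl _ n rfl]
      exact h f hf
    · intro h f hf
      rw [← P.extMk_eq_zero_iff (r • f) (n + 2) rfl (hd f hf) n rfl, ← hsmul f hf]
      exact h _

theorem subsingleton_extMod_iff (n : ℕ) :
    Subsingleton (ExtMod R n M N) ↔ Subsingleton (Abelian.Ext M N n) := by
  have h := mem_annihilator_extMod_iff M N 1 n
  simpa only [Module.mem_annihilator, one_smul, ← subsingleton_iff_forall_eq] using h

theorem le_moduleDepth_iff {S : Type} [CommRing S] [IsLocalRing S] {N : Type} [AddCommGroup N]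
    [Module S N] (n : ℕ∞) : n ≤ moduleDepth S N ↔ ∀ i : ℕ, (i : ℕ∞) < n →
      Subsingleton (Abelian.Ext (ModuleCat.of S (ResidueField S)) (ModuleCat.of S N) i) := by
  simp only [moduleDepth, le_sInf_iff, ← subsingleton_extMod_iff]
  simp only [← not_nontrivial_iff_subsingleton]
  constructor
  · exact fun h i hi hne => (h i ⟨i, rfl, hne⟩).not_gt hi
  · rintro h _ ⟨j, rfl, hne⟩
    exact not_lt.mp fun hj => h j hj hne

end ExtComparison

section Ext

open scoped Pointwise

variable {R : Type u} [CommRing R]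

theorem shortExact_of_exact {K F N : Type u} [AddCommGroup K] [Module R K] [AddCommGroup F]
    [Module R F] [AddCommGroup N] [Module R N] {i : K →ₗ[R] F} {f : F →ₗ[R] N}
    (hi : Function.Injective i) (hif : Function.Exact i f) (hf : Function.Surjective f) :
    (ShortComplex.mk (ModuleCat.ofHom i) (ModuleCat.ofHom f)
      (ModuleCat.hom_ext hif.linearMap_comp_eq_zero)).ShortExact where
  exact := (ShortComplex.ShortExact.moduleCat_exact_iff_function_exact _).mpr hif
  mono_f := (ModuleCat.mono_iff_injective _).mpr hi
  epi_g := (ModuleCat.epi_iff_surjective _).mpr hf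

theorem subsingleton_ext_of_linearEquiv {A B : Type u} [AddCommGroup A] [Module R A]
    [AddCommGroup B] [Module R B] (e : A ≃ₗ[R] B) (M : ModuleCat.{u} R) (i : ℕ)
    [h : Subsingleton (Abelian.Ext (ModuleCat.of R A) M i)] :
    Subsingleton (Abelian.Ext (ModuleCat.of R B) M i) :=
  have g := ((Abelian.extFunctor i).mapIso e.toModuleIso.op).app M
  g.addCommGroupIsoToAddEquiv.toEquiv.subsingleton_congr.mpr h

theorem subsingleton_ext_of_shortExact {S : ShortComplex (ModuleCat.{u} R)} (hS : S.ShortExact)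
    (M : ModuleCat.{u} R) (i : ℕ) [h₁ : Subsingleton (Abelian.Ext S.X₁ M i)]
    [h₃ : Subsingleton (Abelian.Ext S.X₃ M i)] : Subsingleton (Abelian.Ext S.X₂ M i) := by
  refine subsingleton_of_forall_eq 0 fun e => ?_
  obtain ⟨e₃, rfl⟩ := Abelian.Ext.contravariant_sequence_exact₂ hS M e (h₁.elim _ _)
  rw [h₃.elim e₃ 0, Abelian.Ext.comp_zero]

theorem subsingleton_ext_of_forall_prime [IsNoetherianRing R] (I : Ideal R) (M : ModuleCat.{u} R)
    (i : ℕ) (h : ∀ q : PrimeSpectrum R, I ≤ q.asIdeal →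
      Subsingleton (Abelian.Ext (ModuleCat.of R (R ⧸ q.asIdeal)) M i))
    (N : Type u) [AddCommGroup N] [Module R N] [hN : Module.Finite R N]
    (hI : I ≤ Module.annihilator R N) :
    Subsingleton (Abelian.Ext (ModuleCat.of R N) M i) := by
  induction hN using IsNoetherianRing.induction_on_isQuotientEquivQuotientPrime R with
  | subsingleton N =>
    have := (ModuleCat.isZero_of_subsingleton (ModuleCat.of R N)).hasProjectiveDimensionLT_zero
    exact HasProjectiveDimensionLT.subsingleton _ 0 i (Nat.zero_le i) M
  | quotient N q f =>
    rw [f.annihilator_eq, Ideal.annihilator_quotient] at hI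
    have := h q hI
    exact subsingleton_ext_of_linearEquiv f.symm M i
  | exact N₁ N₂ N₃ f g hf hg hfg ih₁ ih₃ =>
    have := ih₁ (hI.trans (LinearMap.annihilator_le_of_injective f hf))
    have := ih₃ (hI.trans (LinearMap.annihilator_le_of_surjective g hg))
    exact subsingleton_ext_of_shortExact (shortExact_of_exact hf hfg hg) M i

theorem subsingleton_ext_of_quotSMulTop [IsNoetherianRing R] [IsLocalRing R]
    (N M : ModuleCat.{u} R) [Module.Finite R N] [Module.Finite R M] {x : R}
    (hx : x ∈ maximalIdeal R) (hreg : IsSMulRegular N x) (i : ℕ)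
    [h : Subsingleton (Abelian.Ext (ModuleCat.of R (QuotSMulTop x N)) M (i + 1))] :
    Subsingleton (Abelian.Ext N M i) := by
  have hdiv (e : Abelian.Ext N M i) : ∃ e', x • e' = e := by
    obtain ⟨e', he'⟩ := Abelian.Ext.contravariant_sequence_exact₁
      hreg.smulShortComplex_shortExact M e (add_comm 1 i) (h.elim _ _)
    have hmul (e' : Abelian.Ext N M i) :
        (Abelian.Ext.mk₀ (x • 𝟙 N)).comp e' (zero_add i) = x • e' := by
      rw [Abelian.Ext.mk₀_smul, Abelian.Ext.smul_comp, Abelian.Ext.mk₀_id_comp]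
    rw [ModuleCat.smulShortComplex_f_eq_smul_id] at he'
    exact ⟨e', (hmul e').symm.trans he'⟩
  have htop : (⊤ : Submodule R (Abelian.Ext N M i)) ≤ maximalIdeal R • ⊤ := by
    intro e _
    obtain ⟨e', rfl⟩ := hdiv e
    exact Submodule.smul_mem_smul hx trivial
  have hbot := Submodule.eq_bot_of_le_smul_of_le_jacobson_bot (maximalIdeal R) ⊤
    Module.Finite.fg_top htop (IsLocalRing.maximalIdeal_le_jacobson _)
  exact (Submodule.subsingleton_iff R).mp (subsingleton_of_bot_eq_top hbot.symm)

theorem isSMulRegular_quotient_of_notMem {p : Ideal R} [hp : p.IsPrime] {x : R} (hx : x ∉ p) :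
    IsSMulRegular (R ⧸ p) x := by
  refine isSMulRegular_iff_right_eq_zero_of_smul.mpr fun a ha => ?_
  obtain ⟨b, rfl⟩ := Ideal.Quotient.mk_surjective a
  rw [← Ideal.Quotient.mk_eq_mk, ← Submodule.Quotient.mk_smul] at ha
  exact Ideal.Quotient.eq_zero_iff_mem.mpr
    ((hp.mem_or_mem (Ideal.Quotient.eq_zero_iff_mem.mp ha)).resolve_left hx)

theorem sup_span_singleton_le_annihilator_quotSMulTop (p : Ideal R) (x : R) :
    p ⊔ Ideal.span {x} ≤ Module.annihilator R (QuotSMulTop x (R ⧸ p)) := by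
  refine sup_le ?_ ?_
  · exact Ideal.annihilator_quotient.ge.trans (LinearMap.annihilator_le_of_surjective
      (Submodule.mkQ (x • (⊤ : Submodule R (R ⧸ p)))) (Submodule.mkQ_surjective _))
  · rw [Ideal.span_singleton_le_iff_mem]
    exact QuotSMulTop.mem_annihilator _ x

theorem exists_mem_maximalIdeal_notMem [IsLocalRing R] {p : Ideal R} [hp : p.IsPrime]
    (hne : p ≠ maximalIdeal R) : ∃ x ∈ maximalIdeal R, x ∉ p :=
  SetLike.exists_of_lt ((le_maximalIdeal hp.ne_top).lt_of_ne hne)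

theorem subsingleton_ext_quotient_of_add_coheight_lt [IsNoetherianRing R] [IsLocalRing R]
    (M : ModuleCat.{u} R) [Module.Finite R M] (d : ℕ)
    (h : ∀ i < d, Subsingleton (Abelian.Ext (ModuleCat.of R (ResidueField R)) M i))
    (p : PrimeSpectrum R) (i : ℕ) (hi : i + Order.coheight p < d) :
    Subsingleton (Abelian.Ext (ModuleCat.of R (R ⧸ p.asIdeal)) M i) := by
  have : WellFoundedGT (PrimeSpectrum R) :=
    StrictMono.wellFoundedGT (f := PrimeSpectrum.asIdeal) fun _ _ h => h
  induction p using WellFoundedGT.induction generalizing i with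
  | ind p ih =>
  by_cases hpm : p.asIdeal = maximalIdeal R
  · have : Subsingleton (Abelian.Ext (ModuleCat.of R (R ⧸ maximalIdeal R)) M i) :=
      h i (by exact_mod_cast le_self_add.trans_lt hi)
    exact subsingleton_ext_of_linearEquiv (Submodule.quotEquivOfEq _ _ hpm.symm) M i
  obtain ⟨x, hxm, hxp⟩ := exists_mem_maximalIdeal_notMem hpm
  have hquot : Subsingleton
      (Abelian.Ext (ModuleCat.of R (QuotSMulTop x (R ⧸ p.asIdeal))) M (i + 1)) := by
    refine subsingleton_ext_of_forall_prime _ M (i + 1) (fun q hq => ?_) _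
      (sup_span_singleton_le_annihilator_quotSMulTop p.asIdeal x)
    have hpq : p < q := by
      refine lt_of_le_of_ne (le_sup_left.trans hq) ?_
      rintro rfl
      exact hxp (hq (Ideal.mem_sup_right (Ideal.mem_span_singleton_self x)))
    refine ih q hpq (i + 1) (lt_of_le_of_lt ?_ hi)
    calc ((i + 1 : ℕ) : ℕ∞) + Order.coheight q = i + (Order.coheight q + 1) := by
          push_cast; ring
      _ ≤ i + Order.coheight p := by gcongr; exact Order.coheight_add_one_le hpq
  exact subsingleton_ext_of_quotSMulTop (ModuleCat.of R (R ⧸ p.asIdeal)) M hxm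
    (isSMulRegular_quotient_of_notMem hxp) i

end Ext

theorem height_add_coheight_le_height_maximalIdeal {R : Type u} [CommRing R]
    [IsLocalRing R] (q : Ideal R) [hq : q.IsPrime] :
    q.height + Order.coheight (⟨q, hq⟩ : PrimeSpectrum R) ≤ (maximalIdeal R).height := by
  rw [← WithBot.coe_le_coe, maximalIdeal_height_eq_ringKrullDim, ringKrullDim,
    Order.krullDim_eq_iSup_height_add_coheight_of_nonempty, WithBot.coe_le_coe,
    PrimeSpectrum.height_eq_orderHeight ⟨q, hq⟩]
  exact le_iSup (fun p : PrimeSpectrum R => Order.height p + Order.coheight p) ⟨q, hq⟩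

section CohenMacaulay

variable {R : Type} [CommRing R] [IsLocalRing R]

theorem IsCMLocalRing.moduleDepth_eq (hCM : IsCMLocalRing R) :
    moduleDepth R R = (maximalIdeal R).height :=
  WithBot.coe_injective (hCM.trans maximalIdeal_height_eq_ringKrullDim.symm)

variable [IsNoetherianRing R]

theorem IsCMLocalRing.subsingleton_ext_quotient (hCM : IsCMLocalRing R) (q : Ideal R)
    [hq : q.IsPrime] (i : ℕ) (hi : (i : ℕ∞) < q.height) :
    Subsingleton (Abelian.Ext (ModuleCat.of R (R ⧸ q)) (ModuleCat.of R R) i) := by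
  have hle := height_add_coheight_le_height_maximalIdeal q
  have hfin : (maximalIdeal R).height ≠ ⊤ := Ideal.height_ne_top Ideal.IsPrime.ne_top'
  obtain ⟨d, hd⟩ := ENat.ne_top_iff_exists.mp hfin
  refine subsingleton_ext_quotient_of_add_coheight_lt (ModuleCat.of R R) d (fun j hj => ?_)
    ⟨q, hq⟩ i ?_
  · exact (le_moduleDepth_iff _).mp (hd.trans hCM.moduleDepth_eq.symm).le j (by exact_mod_cast hj)
  · rw [hd]
    exact ((ENat.add_lt_add_iff_right (ne_top_of_le_ne_top hfin (le_add_self.trans hle))).mpr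
      hi).trans_le hle

theorem IsCMLocalRing.exists_isRegular (hCM : IsCMLocalRing R) (q : Ideal R) [hq : q.IsPrime] :
    ∃ rs : List R, rs.length = q.height ∧ (∀ r ∈ rs, r ∈ q) ∧
      RingTheory.Sequence.IsRegular R rs := by
  obtain ⟨n, hn⟩ := ENat.ne_top_iff_exists.mp (Ideal.height_ne_top (I := q) hq.ne_top)
  have hlt : q • (⊤ : Ideal R) < ⊤ := by simpa using hq.ne_top.lt_top
  have hsupp : Module.support R (R ⧸ q) = PrimeSpectrum.zeroLocus q := by
    rw [Module.support_eq_zeroLocus, Ideal.annihilator_quotient]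
  obtain ⟨rs, hlen, hmem, hreg⟩ := ModuleCat.exists_isRegular_of_exists_subsingleton_ext q n
    (ModuleCat.of R R) hlt (ModuleCat.of R (R ⧸ q)) hsupp fun i hi =>
      hCM.subsingleton_ext_quotient q i (hn ▸ by exact_mod_cast hi)
  exact ⟨rs, by rw [hlen, hn], hmem, hreg⟩

theorem length_le_moduleDepth_of_isRegular (rs : List R) (hmem : ∀ r ∈ rs, r ∈ maximalIdeal R)
    (hreg : RingTheory.Sequence.IsRegular R rs) : rs.length ≤ moduleDepth R R := by
  rw [le_moduleDepth_iff]
  intro i hi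
  have hlt : maximalIdeal R • (⊤ : Ideal R) < ⊤ := by
    simpa using (inferInstance : (maximalIdeal R).IsPrime).ne_top.lt_top
  have hsupp :
      Module.support R (R ⧸ maximalIdeal R) ⊆ PrimeSpectrum.zeroLocus (maximalIdeal R) := by
    rw [Module.support_eq_zeroLocus, Ideal.annihilator_quotient]
  exact ModuleCat.subsingleton_ext_of_exists_isRegular (maximalIdeal R)
    (ModuleCat.of R (R ⧸ maximalIdeal R)) hsupp (ModuleCat.of R R) hlt rs hmem hreg i
    (by exact_mod_cast hi)

theorem IsCMLocalRing.height_le_moduleDepth_localization (hCM : IsCMLocalRing R) (q : Ideal R)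
    [q.IsPrime] :
    q.height ≤ moduleDepth (Localization.AtPrime q) (Localization.AtPrime q) := by
  obtain ⟨rs, hlen, hmem, hreg⟩ := hCM.exists_isRegular q
  have hreg' := hreg.1.isRegular_of_isLocalization_of_mem (Localization.AtPrime q) q hmem
  refine hlen.symm.le.trans
    ((List.length_map _).symm ▸ length_le_moduleDepth_of_isRegular _ (fun r hr => ?_) hreg')
  obtain ⟨s, hs, rfl⟩ := List.mem_map.mp hr
  exact (IsLocalization.AtPrime.to_map_mem_maximal_iff _ q s).mpr (hmem s hs)

end CohenMacaulay

section Syzygy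

/-- `K` is a first syzygy of `N`: the kernel of a surjection onto `N` from a finite free module.
No minimality is required, so syzygies are not unique. -/
def IsSyzygy (R : Type u) [CommRing R] (N K : ModuleCat.{u} R) : Prop :=
  ∃ (F : ModuleCat.{u} R) (i : K →ₗ[R] F) (f : F →ₗ[R] N), Module.Free R F ∧ Module.Finite R F ∧
    Function.Injective i ∧ Function.Exact i f ∧ Function.Surjective f

/-- `K` is an `n`-th syzygy of `N`, obtained by taking first syzygies `n` times. -/
def IsNthSyzygy (R : Type u) [CommRing R] : ℕ → ModuleCat.{u} R → ModuleCat.{u} R → Prop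
  | 0, N, K => N = K
  | n + 1, N, K => ∃ L : ModuleCat.{u} R, IsNthSyzygy R n N L ∧ IsSyzygy R L K

/-- The localization `M_q`, as a module over Mathlib's model of `R_q`. -/
abbrev localizedAtPrime {R : Type u} [CommRing R] (q : Ideal R) [q.IsPrime] (M : ModuleCat.{u} R) :
    ModuleCat.{u} (Localization.AtPrime q) :=
  ModuleCat.of (Localization.AtPrime q) (LocalizedModule q.primeCompl M)

variable {R : Type u} [CommRing R] {N K : ModuleCat.{u} R} {n : ℕ}

theorem IsSyzygy.finite [IsNoetherianRing R] (h : IsSyzygy R N K) : Module.Finite R K := by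
  obtain ⟨F, i, f, _, _, hi, _, _⟩ := h
  exact Module.Finite.of_injective i hi

theorem exists_isSyzygy (N : ModuleCat.{u} R) [Module.Finite R N] : ∃ K, IsSyzygy R N K := by
  obtain ⟨n, f, hf⟩ := Module.Finite.exists_fin' R N
  exact ⟨ModuleCat.of R (LinearMap.ker f), ModuleCat.of R (Fin n → R), (LinearMap.ker f).subtype, f,
    inferInstance, inferInstance, Subtype.val_injective, LinearMap.exact_subtype_ker_map f, hf⟩

theorem IsSyzygy.localizedAtPrime (h : IsSyzygy R N K) (q : Ideal R) [q.IsPrime] :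
    IsSyzygy (Localization.AtPrime q) (localizedAtPrime q N) (localizedAtPrime q K) := by
  obtain ⟨F, i, f, _, _, hi, hif, hf⟩ := h
  exact ⟨_root_.localizedAtPrime q F, LocalizedModule.map q.primeCompl i,
    LocalizedModule.map q.primeCompl f,
    Module.free_of_isLocalizedModule q.primeCompl (LocalizedModule.mkLinearMap q.primeCompl F),
    inferInstance, LocalizedModule.map_injective _ _ hi, LocalizedModule.map_exact _ _ _ hif,
    LocalizedModule.map_surjective _ _ hf⟩

theorem IsSyzygy.projective (h : IsSyzygy R N K) [Module.Projective R N] :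
    Module.Projective R K := by
  obtain ⟨F, i, f, _, _, hi, hif, hf⟩ := h
  obtain ⟨l, hl⟩ := ((hif.split_tfae hi hf).out 0 1).mp
    (Module.projective_lifting_property f LinearMap.id hf)
  exact Module.Projective.of_split i l hl

theorem IsNthSyzygy.finite [IsNoetherianRing R] (h : IsNthSyzygy R n N K) [Module.Finite R N] :
    Module.Finite R K := by
  cases n with
  | zero => cases h; assumption
  | succ n => exact h.choose_spec.2.finite

theorem exists_isNthSyzygy [IsNoetherianRing R] (n : ℕ) (N : ModuleCat.{u} R) [Module.Finite R N] :
    ∃ K, IsNthSyzygy R n N K := by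
  induction n with
  | zero => exact ⟨N, rfl⟩
  | succ n ih =>
    obtain ⟨L, hL⟩ := ih
    have := hL.finite
    obtain ⟨K, hK⟩ := exists_isSyzygy L
    exact ⟨K, L, hL, hK⟩

theorem IsNthSyzygy.localizedAtPrime (h : IsNthSyzygy R n N K) (q : Ideal R) [q.IsPrime] :
    IsNthSyzygy (Localization.AtPrime q) n (localizedAtPrime q N) (localizedAtPrime q K) := by
  induction n generalizing K with
  | zero => cases h; rfl
  | succ n ih =>
    obtain ⟨L, hL, hK⟩ := h
    exact ⟨_, ih hL, hK.localizedAtPrime q⟩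

theorem IsNthSyzygy.projective (h : IsNthSyzygy R n N K) [Module.Projective R N] :
    Module.Projective R K := by
  induction n generalizing K with
  | zero => cases h; assumption
  | succ n ih =>
    obtain ⟨L, hL, hK⟩ := h
    have := ih hL
    exact hK.projective

theorem IsNthSyzygy.exists_isSyzygy_isNthSyzygy (h : IsNthSyzygy R (n + 1) N K) :
    ∃ L, IsSyzygy R N L ∧ IsNthSyzygy R n L K := by
  induction n generalizing K with
  | zero =>
    obtain ⟨L, rfl, hK⟩ := h
    exact ⟨K, hK, rfl⟩
  | succ n ih =>
    obtain ⟨L, hL, hK⟩ := h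
    obtain ⟨L', hL', hLL'⟩ := ih hL
    exact ⟨L', hL', L, hLL', hK⟩

theorem subsingleton_ext_X₁_of_shortExact {S : ShortComplex (ModuleCat.{u} R)} (hS : S.ShortExact)
    (X : ModuleCat.{u} R) (i : ℕ) [h₂ : Subsingleton (Abelian.Ext X S.X₂ i)]
    (h₃ : ∀ j, j + 1 = i → Subsingleton (Abelian.Ext X S.X₃ j)) :
    Subsingleton (Abelian.Ext X S.X₁ i) := by
  refine subsingleton_of_forall_eq 0 fun e => ?_
  have he : e.comp (Abelian.Ext.mk₀ S.f) (add_zero i) = 0 := h₂.elim _ _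
  cases i with
  | zero =>
    obtain ⟨g, rfl⟩ := (Abelian.Ext.mk₀_bijective X S.X₁).2 e
    have := hS.mono_f
    rw [Abelian.Ext.mk₀_comp_mk₀, Abelian.Ext.mk₀_eq_zero_iff] at he
    rw [Limits.zero_of_comp_mono S.f he, Abelian.Ext.mk₀_zero]
  | succ j =>
    obtain ⟨e₃, rfl⟩ := Abelian.Ext.covariant_sequence_exact₁ X hS e he rfl
    rw [(h₃ j rfl).elim e₃ 0, Abelian.Ext.zero_comp]

theorem subsingleton_ext_of_free (X F : ModuleCat.{u} R) [Module.Free R F] [Module.Finite R F]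
    (i : ℕ) [h : Subsingleton (Abelian.Ext X (ModuleCat.of R R) i)] :
    Subsingleton (Abelian.Ext X F i) := by
  refine subsingleton_of_forall_eq 0 fun e => ?_
  let b := Module.Free.chooseBasis R F
  have hid : 𝟙 F = ∑ j, (ModuleCat.ofHom (b.coord j) ≫
      (ModuleCat.ofHom (LinearMap.toSpanSingleton R F (b j)) : ModuleCat.of R R ⟶ F)) := by
    ext x
    rw [ModuleCat.hom_sum, LinearMap.sum_apply]
    simp
  rw [← Abelian.Ext.comp_mk₀_id e, hid, Abelian.Ext.mk₀_sum, Abelian.Ext.comp_sum]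
  refine Finset.sum_eq_zero fun j _ => ?_
  rw [← Abelian.Ext.mk₀_comp_mk₀, ← Abelian.Ext.comp_assoc_of_third_deg_zero,
    h.elim (e.comp _ _) 0, Abelian.Ext.zero_comp]

theorem IsNthSyzygy.subsingleton_ext (h : IsNthSyzygy R n N K) (X : ModuleCat.{u} R) (i : ℕ)
    (hi : i < n) (hX : ∀ j ≤ i, Subsingleton (Abelian.Ext X (ModuleCat.of R R) j)) :
    Subsingleton (Abelian.Ext X K i) := by
  induction n generalizing K i with
  | zero => omega
  | succ n ih =>
    obtain ⟨L, hL, F, u, f, _, _, hu, huf, hf⟩ := h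
    have := hX i le_rfl
    have := subsingleton_ext_of_free X F i
    refine subsingleton_ext_X₁_of_shortExact (shortExact_of_exact hu huf hf) X i ?_
    rintro j rfl
    exact ih hL j (by omega) fun k hk => hX k (by omega)

theorem subsingleton_localizedModule_quotient_of_pow_le [IsLocalRing R] {I : Ideal R} {n : ℕ}
    (hI : maximalIdeal R ^ n ≤ I) (q : Ideal R) [hq : q.IsPrime] (hne : q ≠ maximalIdeal R) :
    Subsingleton (LocalizedModule q.primeCompl (R ⧸ I)) := by
  obtain ⟨x, hxm, hxq⟩ := exists_mem_maximalIdeal_notMem hne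
  refine LocalizedModule.subsingleton_iff.mpr fun m => ⟨x ^ n, mt (hq.mem_of_pow_mem n) hxq, ?_⟩
  refine Module.mem_annihilator.mp ?_ m
  rw [Ideal.annihilator_quotient]
  exact hI (Ideal.pow_mem_pow hxm n)

end Syzygy

section CohenMacaulaySyzygy

variable {R : Type} [CommRing R] [IsLocalRing R] [IsNoetherianRing R] {K : ModuleCat.{0} R} {j : ℕ}

theorem IsNthSyzygy.isMCMModule (hCM : IsCMLocalRing R) (hj : (maximalIdeal R).height ≤ j)
    {N : ModuleCat.{0} R} (hK : IsNthSyzygy R j N K) : IsMCMModule R K := by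
  intro q hq
  rw [IsLocalization.AtPrime.ringKrullDim_eq_height q, WithBot.coe_le_coe, le_moduleDepth_iff]
  intro i hi
  have hij : i < j := by
    exact_mod_cast hi.trans_le ((Ideal.height_mono (le_maximalIdeal hq.ne_top)).trans hj)
  refine (hK.localizedAtPrime q).subsingleton_ext _ i hij fun k hk => ?_
  exact (le_moduleDepth_iff _).mp (hCM.height_le_moduleDepth_localization q) k
    (hi.trans_le' (by exact_mod_cast hk))

theorem IsNthSyzygy.memCM0 (hCM : IsCMLocalRing R) (hj : (maximalIdeal R).height ≤ j) {I : Ideal R}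
    {n : ℕ} (hI : maximalIdeal R ^ n ≤ I) (hK : IsNthSyzygy R j (ModuleCat.of R (R ⧸ I)) K) :
    MemCM0 R K := by
  have hfin := hK.finite
  refine ⟨hfin, hK.isMCMModule hCM hj, fun q _ hq => ?_⟩
  have := subsingleton_localizedModule_quotient_of_pow_le hI q hq
  have : Module.Projective (Localization.AtPrime q) (LocalizedModule q.primeCompl K) :=
    (hK.localizedAtPrime q).projective
  have : Module.Flat (Localization.AtPrime q) (LocalizedModule q.primeCompl K) :=
    Module.Flat.of_projective
  exact Module.free_of_flat_of_isLocalRing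

end CohenMacaulaySyzygy

section Tor

open TensorProduct

variable {R : Type u} [CommRing R]

theorem lTensor_rTensor_comm {X Y Z W : Type u} [AddCommGroup X] [Module R X] [AddCommGroup Y]
    [Module R Y] [AddCommGroup Z] [Module R Z] [AddCommGroup W] [Module R W]
    (p : X →ₗ[R] Y) (q : Z →ₗ[R] W) (t : X ⊗[R] Z) :
    q.lTensor Y (p.rTensor Z t) = p.rTensor W (q.lTensor X t) := by
  rw [← LinearMap.comp_apply, ← LinearMap.comp_apply, LinearMap.lTensor_comp_rTensor,
    LinearMap.rTensor_comp_lTensor]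

/-- The element `a` annihilates `Tor₁(B, L)`. The latter is encoded as the kernel of
`B ⊗ K → B ⊗ F` for a short exact sequence `0 → K → F → L → 0` with `F` free; all such sequences
are required, which spares the independence of the choice. -/
def AnnihilatesTorOne (a : R) (B L : ModuleCat.{u} R) : Prop :=
  ∀ (K F : ModuleCat.{u} R) (i : K →ₗ[R] F) (f : F →ₗ[R] L), Module.Free R F →
    Function.Injective i → Function.Exact i f → Function.Surjective f →
    ∀ z : B ⊗[R] K, i.lTensor B z = 0 → a • z = 0

variable {a : R} {B M X L : ModuleCat.{u} R}

/-- The diagram chase behind `Tor₁(ΩB, X) = Tor₂(B, X) = Tor₁(B, ΩX)`. -/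
theorem AnnihilatesTorOne.of_isSyzygy (h : AnnihilatesTorOne a M X) (hB : IsSyzygy R B M)
    (hX : IsSyzygy R X L) : AnnihilatesTorOne a B L := by
  obtain ⟨G, u, g, _, _, hu, hug, hg⟩ := hB
  obtain ⟨F', i', f', hF', _, hi', hif', hf'⟩ := hX
  intro K F i f _ hi hif hf z hz
  obtain ⟨y, rfl⟩ := LinearMap.rTensor_surjective K hg z
  rw [lTensor_rTensor_comm] at hz
  obtain ⟨w, hw⟩ := (rTensor_exact F hug hg _).mp hz
  have hfw : i'.lTensor M (f.lTensor M w) = 0 := by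
    apply Module.Flat.rTensor_preserves_injective_linearMap (M := F') u hu
    rw [map_zero, ← lTensor_rTensor_comm, ← lTensor_rTensor_comm, hw,
      (lTensor_exact G hif hf).apply_apply_eq_zero, map_zero]
  have hafw : f.lTensor M (a • w) = 0 := by
    rw [map_smul, h L F' i' f' hF' hi' hif' hf' _ hfw]
  obtain ⟨v, hv⟩ := (lTensor_exact M hif hf _).mp hafw
  have hvy : u.rTensor K v = a • y := by
    apply Module.Flat.lTensor_preserves_injective_linearMap (M := G) i hi
    rw [lTensor_rTensor_comm, hv, map_smul, map_smul, hw]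
  rw [← map_smul, ← hvy]
  exact (rTensor_exact K hug hg).apply_apply_eq_zero v

theorem AnnihilatesTorOne.of_isNthSyzygy {n : ℕ} (h : AnnihilatesTorOne a M X)
    (hB : IsNthSyzygy R n B M) (hX : IsNthSyzygy R n X L) : AnnihilatesTorOne a B L := by
  induction n generalizing M X with
  | zero => cases hB; cases hX; exact h
  | succ n ih =>
    obtain ⟨M', hM', hM⟩ := hB
    obtain ⟨X', hX', hL⟩ := hX.exists_isSyzygy_isNthSyzygy
    exact ih (h.of_isSyzygy hM hX') hM' hL

theorem annihilatesTorOne_of_comp_eq_smul_id {G : ModuleCat.{u} R} [Module.Free R G]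
    (s : M →ₗ[R] G) (t : G →ₗ[R] M) (hts : t ∘ₗ s = a • LinearMap.id) (X : ModuleCat.{u} R) :
    AnnihilatesTorOne a M X := by
  intro K F i f _ hi _ _ z hz
  have hs : s.rTensor K z = 0 := by
    apply Module.Flat.lTensor_preserves_injective_linearMap (M := G) i hi
    rw [map_zero, lTensor_rTensor_comm, hz, map_zero]
  have hats : (t ∘ₗ s).rTensor K z = 0 := by
    rw [LinearMap.rTensor_comp, LinearMap.comp_apply, hs, map_zero]
  rwa [hts, LinearMap.rTensor_smul, LinearMap.rTensor_id] at hats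

theorem exists_comp_eq_smul_id_of_smul_extClass_eq_zero {S : ShortComplex (ModuleCat.{u} R)}
    (hS : S.ShortExact) (ha : a • hS.extClass = 0) : ∃ s : S.X₃ ⟶ S.X₂, s ≫ S.g = a • 𝟙 S.X₃ := by
  have hcomp : (Abelian.Ext.mk₀ (a • 𝟙 S.X₃)).comp hS.extClass (zero_add 1) = 0 := by
    rw [Abelian.Ext.mk₀_smul, Abelian.Ext.smul_comp, Abelian.Ext.mk₀_id_comp, ha]
  obtain ⟨x, hx⟩ := Abelian.Ext.covariant_sequence_exact₃ S.X₃ hS _ _ hcomp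
  obtain ⟨s, rfl⟩ := (Abelian.Ext.mk₀_bijective _ _).2 x
  exact ⟨s, (Abelian.Ext.mk₀_bijective _ _).1 ((Abelian.Ext.mk₀_comp_mk₀ s S.g).symm.trans hx)⟩

theorem IsSyzygy.annihilatesTorOne (hL : IsSyzygy R M L) (ha : ∀ e : Abelian.Ext M L 1, a • e = 0)
    (X : ModuleCat.{u} R) : AnnihilatesTorOne a M X := by
  obtain ⟨F, i, f, _, _, hi, hif, hf⟩ := hL
  have hS := shortExact_of_exact hi hif hf
  obtain ⟨s, hs⟩ := exists_comp_eq_smul_id_of_smul_extClass_eq_zero hS (ha hS.extClass)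
  exact annihilatesTorOne_of_comp_eq_smul_id s.hom f (congrArg ModuleCat.Hom.hom hs) X

theorem one_tmul_eq_zero_iff_mem_smul_top (I : Ideal R) {N : Type u} [AddCommGroup N] [Module R N]
    (y : N) : (1 ⊗ₜ[R] y : (R ⧸ I) ⊗[R] N) = 0 ↔ y ∈ I • (⊤ : Submodule R N) := by
  rw [← (TensorProduct.quotTensorEquivQuotSMul N I).map_eq_zero_iff,
    TensorProduct.quotTensorEquivQuotSMul_mk_one_tmul, Submodule.Quotient.mk_eq_zero]

theorem exists_eq_one_tmul (I : Ideal R) {N : Type u} [AddCommGroup N] [Module R N]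
    (t : (R ⧸ I) ⊗[R] N) : ∃ y : N, t = 1 ⊗ₜ[R] y := by
  obtain ⟨y, hy⟩ := Submodule.Quotient.mk_surjective _ (TensorProduct.quotTensorEquivQuotSMul N I t)
  refine ⟨y, (TensorProduct.quotTensorEquivQuotSMul N I).injective ?_⟩
  rw [TensorProduct.quotTensorEquivQuotSMul_mk_one_tmul, hy]

theorem AnnihilatesTorOne.smul_mem_smul_top {I : Ideal R}
    (h : AnnihilatesTorOne a (ModuleCat.of R (R ⧸ I)) L) {K F : ModuleCat.{u} R}
    [hF : Module.Free R F] (i : K →ₗ[R] F) (f : F →ₗ[R] L) (hi : Function.Injective i)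
    (hif : Function.Exact i f) (hf : Function.Surjective f) (z : K)
    (hz : i z ∈ I • (⊤ : Submodule R F)) : a • z ∈ I • (⊤ : Submodule R K) := by
  rw [← one_tmul_eq_zero_iff_mem_smul_top] at hz ⊢
  rw [TensorProduct.tmul_smul]
  exact h K F i f hF hi hif hf _ hz

end Tor

section LocalFreeness

variable {R : Type u} [CommRing R]

theorem free_of_forall_mem_smul_top [IsLocalRing R] {K F M : Type u} [AddCommGroup K] [Module R K]
    [Module.Finite R K] [AddCommGroup F] [Module R F] [Module.Finite R F] [Module.Free R F]
    [AddCommGroup M] [Module R M] (i : K →ₗ[R] F) (f : F →ₗ[R] M) (hif : Function.Exact i f)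
    (hf : Function.Surjective f)
    (h : ∀ z : K, i z ∈ maximalIdeal R • (⊤ : Submodule R F) →
      z ∈ maximalIdeal R • (⊤ : Submodule R K)) : Module.Free R M := by
  refine Module.free_of_lTensor_residueField_injective i f hf hif ?_
  change Function.Injective (LinearMap.lTensor (R ⧸ maximalIdeal R) i)
  rw [injective_iff_map_eq_zero]
  intro t ht
  obtain ⟨z, rfl⟩ := exists_eq_one_tmul _ t
  rw [LinearMap.lTensor_tmul, one_tmul_eq_zero_iff_mem_smul_top] at ht
  exact (one_tmul_eq_zero_iff_mem_smul_top _ _).mpr (h z ht)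

theorem mem_maximalIdeal_smul_top_localizedModule_iff (p : Ideal R) [p.IsPrime] {N : Type u}
    [AddCommGroup N] [Module R N] (x : LocalizedModule p.primeCompl N) :
    x ∈ maximalIdeal (Localization.AtPrime p) • (⊤ : Submodule (Localization.AtPrime p)
        (LocalizedModule p.primeCompl N)) ↔
      ∃ m ∈ p • (⊤ : Submodule R N), ∃ s : p.primeCompl, LocalizedModule.mk m s = x := by
  have h := Submodule.localized'_smul (Localization.AtPrime p) p.primeCompl
    (LocalizedModule.mkLinearMap p.primeCompl N) (⊤ : Submodule R N) p
  rw [Ideal.localized'_eq_map, Submodule.localized'_top,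
    Localization.AtPrime.map_eq_maximalIdeal] at h
  rw [← h, Submodule.mem_localized']
  simp only [IsLocalizedModule.mk_eq_mk']

theorem free_localizedModule_of_forall_smul_mem (p : Ideal R) [p.IsPrime] {a : R} (ha : a ∉ p)
    {K F L : Type u} [AddCommGroup K] [Module R K] [Module.Finite R K] [AddCommGroup F] [Module R F]
    [Module.Finite R F] [Module.Free R F] [AddCommGroup L] [Module R L] (i : K →ₗ[R] F)
    (f : F →ₗ[R] L) (hif : Function.Exact i f) (hf : Function.Surjective f)
    (h : ∀ z : K, i z ∈ p • (⊤ : Submodule R F) → a • z ∈ p • (⊤ : Submodule R K)) :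
    Module.Free (Localization.AtPrime p) (LocalizedModule p.primeCompl L) := by
  have : Module.Free (Localization.AtPrime p) (LocalizedModule p.primeCompl F) :=
    Module.free_of_isLocalizedModule p.primeCompl (LocalizedModule.mkLinearMap p.primeCompl F)
  refine free_of_forall_mem_smul_top (LocalizedModule.map p.primeCompl i)
    (LocalizedModule.map p.primeCompl f) (LocalizedModule.map_exact _ _ _ hif)
    (LocalizedModule.map_surjective _ _ hf) fun z hz => ?_
  induction z with
  | h z s =>
  rw [LocalizedModule.map_mk, mem_maximalIdeal_smul_top_localizedModule_iff] at hz
  obtain ⟨m, hm, t, hmt⟩ := hz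
  obtain ⟨u, hu⟩ := LocalizedModule.mk_eq.mp hmt
  have hiz : i ((u * t : R) • z) = (u * s : R) • m := by
    rw [map_smul, mul_smul, mul_smul]
    exact hu.symm
  have hz : a • (u * t : R) • z ∈ p • (⊤ : Submodule R K) :=
    h _ (hiz ▸ Submodule.smul_mem _ _ hm)
  rw [mem_maximalIdeal_smul_top_localizedModule_iff]
  refine ⟨_, hz, ⟨a, ha⟩ * (u * t) * s, ?_⟩
  rw [← mul_smul]
  exact LocalizedModule.mk_cancel_common_left (⟨a, ha⟩ * (u * t) : p.primeCompl) s z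

theorem mem_smul_top_of_forall_mem_sup_pow_smul_top [IsNoetherianRing R] [IsLocalRing R]
    (p : Ideal R) {K : Type u} [AddCommGroup K] [Module R K] [Module.Finite R K] (y : K)
    (h : ∀ n : ℕ, y ∈ (p ⊔ maximalIdeal R ^ n) • (⊤ : Submodule R K)) :
    y ∈ p • (⊤ : Submodule R K) := by
  have hkrull := Ideal.iInf_pow_smul_eq_bot_of_isLocalRing (M := K ⧸ (p • (⊤ : Submodule R K)))
    (maximalIdeal R) Ideal.IsPrime.ne_top'
  rw [← Submodule.Quotient.mk_eq_zero, ← Submodule.mem_bot R, ← hkrull, Submodule.mem_iInf]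
  intro n
  have hy := Submodule.mem_map_of_mem (f := (p • (⊤ : Submodule R K)).mkQ) (h n)
  rw [Submodule.sup_smul, Submodule.map_sup, Submodule.mkQ_map_self, bot_sup_eq,
    Submodule.map_smul''] at hy
  exact Submodule.smul_mono le_rfl le_top hy

end LocalFreeness

section TorOverCohenMacaulay

variable {R : Type} [CommRing R] [IsLocalRing R] [IsNoetherianRing R]

theorem annihilatesTorOne_of_pow_le (hCM : IsCMLocalRing R) {a : R}
    (ha : ∀ M N : ModuleCat.{0} R, MemCM0 R M → MemCM0 R N →
      a ∈ Module.annihilator R (ExtMod R 1 M N))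
    {d : ℕ} (hd : (maximalIdeal R).height ≤ d) {I : Ideal R} {n : ℕ}
    (hI : maximalIdeal R ^ n ≤ I) {X L : ModuleCat.{0} R} (hL : IsNthSyzygy R d X L) :
    AnnihilatesTorOne a (ModuleCat.of R (R ⧸ I)) L := by
  obtain ⟨M, hM⟩ := exists_isNthSyzygy d (ModuleCat.of R (R ⧸ I))
  have := hM.finite
  obtain ⟨K, hK⟩ := exists_isSyzygy M
  have hKd : IsNthSyzygy R (d + 1) (ModuleCat.of R (R ⧸ I)) K := ⟨M, hM, hK⟩
  have haExt := ha M K (hM.memCM0 hCM hd hI)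
    (hKd.memCM0 hCM (hd.trans (by exact_mod_cast d.le_succ)) hI)
  have hTor := hK.annihilatesTorOne ((mem_annihilator_extMod_iff M K a 1).mp haExt) X
  exact hTor.of_isNthSyzygy hM hL

theorem exists_isNthSyzygy_free_localizedAtPrime (hCM : IsCMLocalRing R) (p : Ideal R) [p.IsPrime]
    {a : R} (hap : a ∉ p)
    (ha : ∀ M N : ModuleCat.{0} R, MemCM0 R M → MemCM0 R N →
      a ∈ Module.annihilator R (ExtMod R 1 M N)) :
    ∃ (d : ℕ) (L : ModuleCat.{0} R), IsNthSyzygy R d (ModuleCat.of R (R ⧸ p)) L ∧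
      Module.Free (Localization.AtPrime p) (localizedAtPrime p L) := by
  obtain ⟨d, hd⟩ := ENat.ne_top_iff_exists.mp
    (Ideal.height_ne_top (I := maximalIdeal R) Ideal.IsPrime.ne_top')
  obtain ⟨L, hL⟩ := exists_isNthSyzygy d (ModuleCat.of R (R ⧸ p))
  have := hL.finite
  obtain ⟨K, hK⟩ := exists_isSyzygy L
  have := hK.finite
  obtain ⟨F, i, f, _, _, hi, hif, hf⟩ := hK
  refine ⟨d, L, hL, free_localizedModule_of_forall_smul_mem p hap i f hif hf fun z hz => ?_⟩
  refine mem_smul_top_of_forall_mem_sup_pow_smul_top p _ fun n => ?_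
  exact (annihilatesTorOne_of_pow_le hCM ha hd.ge le_sup_right hL).smul_mem_smul_top i f hi hif hf z
    (Submodule.smul_mono_left le_sup_left hz)

end TorOverCohenMacaulay

section ProjectiveDimension

variable {S : Type u} [CommRing S]

theorem IsSyzygy.hasProjectiveDimensionLE_succ_iff {N K : ModuleCat.{u} S} (h : IsSyzygy S N K)
    (n : ℕ) : HasProjectiveDimensionLE N (n + 1) ↔ HasProjectiveDimensionLE K n := by
  obtain ⟨F, i, f, _, _, hi, hif, hf⟩ := h
  exact (shortExact_of_exact hi hif hf).hasProjectiveDimensionLT_X₃_iff n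
    ((IsProjective.iff_projective F).mp Module.Projective.of_free)

theorem IsNthSyzygy.hasProjectiveDimensionLE {N K : ModuleCat.{u} S} {n : ℕ}
    (h : IsNthSyzygy S n N K) {j : ℕ} (hK : HasProjectiveDimensionLE K j) :
    HasProjectiveDimensionLE N (j + n) := by
  induction n generalizing K j with
  | zero => cases h; exact hK
  | succ n ih =>
    obtain ⟨L, hL, hLK⟩ := h
    simpa only [Nat.add_right_comm, Nat.add_assoc] using
      ih hL ((hLK.hasProjectiveDimensionLE_succ_iff j).mpr hK)

theorem hasProjectiveDimensionLE_zero_iff (M : ModuleCat.{u} S) :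
    HasProjectiveDimensionLE M 0 ↔ Module.Projective S M :=
  (projective_iff_hasProjectiveDimensionLE_zero M).symm.trans (IsProjective.iff_projective M).symm

theorem isSMulRegular_of_flat {x : S} (hx : IsSMulRegular S x) (F : Type u) [AddCommGroup F]
    [Module S F] [Module.Flat S F] : IsSMulRegular F x :=
  ((TensorProduct.rid S F).isSMulRegular_congr x).mp (hx.lTensor F)

theorem IsSyzygy.quotSMulTop {N K : ModuleCat.{u} S} (h : IsSyzygy S N K) {x : S}
    (hN : IsSMulRegular N x) :
    IsSyzygy (S ⧸ Ideal.span {x}) (ModuleCat.of _ (QuotSMulTop x N))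
      (ModuleCat.of _ (QuotSMulTop x K)) := by
  obtain ⟨F, i, f, _, _, hi, hif, hf⟩ := h
  have hsurj : Function.Surjective (algebraMap S (S ⧸ Ideal.span {x})) :=
    Ideal.Quotient.mk_surjective
  have hinj : Function.Injective (QuotSMulTop.map x i) :=
    (LinearMap.exact_zero_iff_injective (QuotSMulTop x K) _).mp <| by
      simpa only [map_zero] using
        QuotSMulTop.map_first_exact_on_four_term_exact_of_isSMulRegular_last
          ((LinearMap.exact_zero_iff_injective K i).mpr hi) hif hN
  exact ⟨ModuleCat.of _ (QuotSMulTop x F),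
    LinearMap.extendScalarsOfSurjective hsurj (QuotSMulTop.map x i),
    LinearMap.extendScalarsOfSurjective hsurj (QuotSMulTop.map x f),
    inferInstanceAs (Module.Free _ (QuotSMulTop x F)),
    Module.Finite.of_restrictScalars_finite S (S ⧸ Ideal.span {x}) (QuotSMulTop x F),
    hinj, QuotSMulTop.map_exact x hif hf, QuotSMulTop.map_surjective x hf⟩

theorem isSyzygy_quotient (I : Ideal S) :
    IsSyzygy S (ModuleCat.of S (S ⧸ I)) (ModuleCat.of S I) :=
  ⟨ModuleCat.of S S, I.subtype, I.mkQ, inferInstance, inferInstance,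
    Subtype.val_injective, LinearMap.exact_subtype_mkQ I, Submodule.mkQ_surjective I⟩

theorem hasProjectiveDimensionLE_quotient_of_apply_eq_one {I : Ideal S} {M : ModuleCat.{u} S}
    {n : ℕ} (hM : HasProjectiveDimensionLE M n) {e : M}
    (he : I ≤ LinearMap.ker (LinearMap.toSpanSingleton S M e)) (β : M →ₗ[S] S ⧸ I) (hβ : β e = 1) :
    HasProjectiveDimensionLE (ModuleCat.of S (S ⧸ I)) n := by
  let α : (S ⧸ I) →ₗ[S] M := I.liftQ (LinearMap.toSpanSingleton S M e) he
  have hβα : β ∘ₗ α = LinearMap.id := by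
    refine Submodule.linearMap_qext _ (LinearMap.ext_ring ?_)
    change β ((1 : S) • e) = 1
    rw [one_smul, hβ]
  exact Retract.hasProjectiveDimensionLT ⟨ModuleCat.ofHom α, ModuleCat.ofHom β,
    congrArg ModuleCat.ofHom hβα⟩ (n + 1)

variable [IsLocalRing S]

theorem exists_linearMap_maximalIdeal_apply_eq_one {x : S} (hx : x ∈ maximalIdeal S)
    (hx2 : x ∉ maximalIdeal S ^ 2) :
    ∃ φ : maximalIdeal S →ₗ[S] S ⧸ maximalIdeal S, φ ⟨x, hx⟩ = 1 := by
  have hcot : (maximalIdeal S).toCotangent ⟨x, hx⟩ ≠ 0 :=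
    fun h => hx2 ((Ideal.toCotangent_eq_zero _ _).mp h)
  obtain ⟨φ, hφ⟩ :=
    Module.Projective.exists_dual_eq_one (ResidueField S) (V := CotangentSpace S) hcot
  exact ⟨φ.restrictScalars S ∘ₗ (maximalIdeal S).toCotangent, hφ⟩

theorem free_of_hasProjectiveDimensionLE_zero (M : ModuleCat.{u} S) [Module.Finite S M]
    (hM : HasProjectiveDimensionLE M 0) : Module.Free S M := by
  have := (hasProjectiveDimensionLE_zero_iff M).mp hM
  exact Module.free_of_flat_of_isLocalRing

variable [IsNoetherianRing S]

theorem free_of_hasProjectiveDimensionLE_of_mul_eq_zero {s : S} (hs0 : s ≠ 0)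
    (hs : ∀ y ∈ maximalIdeal S, s * y = 0) (n : ℕ) (M : ModuleCat.{u} S) [Module.Finite S M]
    (hM : HasProjectiveDimensionLE M n) : Module.Free S M := by
  induction n generalizing M with
  | zero => exact free_of_hasProjectiveDimensionLE_zero M hM
  | succ n ih =>
    obtain ⟨K, hK⟩ := exists_isSyzygy M
    have := hK.finite
    have := ih K ((hK.hasProjectiveDimensionLE_succ_iff n).mp hM)
    obtain ⟨F, i, f, _, _, hi, hif, hf⟩ := hK
    refine free_of_forall_mem_smul_top i f hif hf fun z hz => ?_
    have hsF : ∀ w ∈ maximalIdeal S • (⊤ : Submodule S F), s • w = 0 := fun w hw => by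
      induction hw using Submodule.smul_induction_on' with
      | smul r hr m _ => rw [← mul_smul, hs r hr, zero_smul]
      | add a _ b _ ha hb => rw [smul_add, ha, hb, add_zero]
    have hsz : s • z = 0 := hi (by rw [map_smul, hsF _ hz, map_zero])
    let b := Module.Free.chooseBasis S K
    rw [← b.sum_repr z]
    refine Submodule.sum_mem _ fun j _ => Submodule.smul_mem_smul ?_ trivial
    have hsj : s * b.repr z j = 0 := by simpa using congrArg (fun t => b.repr t j) hsz
    exact fun hu => hs0 (hu.mul_left_eq_zero.mp hsj)

theorem maximalIdeal_eq_bot_of_hasProjectiveDimensionLE {s : S} (hs0 : s ≠ 0)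
    (hs : ∀ y ∈ maximalIdeal S, s * y = 0) {n : ℕ}
    (h : HasProjectiveDimensionLE (ModuleCat.of S (S ⧸ maximalIdeal S)) n) :
    maximalIdeal S = ⊥ := by
  have : Module.Free S (S ⧸ maximalIdeal S) :=
    free_of_hasProjectiveDimensionLE_of_mul_eq_zero hs0 hs n _ h
  rw [← Ideal.annihilator_quotient (I := maximalIdeal S)]
  exact Module.annihilator_eq_bot.mpr inferInstance

theorem hasProjectiveDimensionLE_quotSMulTop {x : S} (hx : IsSMulRegular S x) (n : ℕ)
    (M : ModuleCat.{u} S) [Module.Finite S M] (hMx : IsSMulRegular M x)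
    (hM : HasProjectiveDimensionLE M n) :
    HasProjectiveDimensionLE (ModuleCat.of (S ⧸ Ideal.span {x}) (QuotSMulTop x M)) n := by
  induction n generalizing M with
  | zero =>
    have := free_of_hasProjectiveDimensionLE_zero M hM
    exact (hasProjectiveDimensionLE_zero_iff _).mpr
      (inferInstanceAs (Module.Projective _ (QuotSMulTop x M)))
  | succ n ih =>
    obtain ⟨K, hK⟩ := exists_isSyzygy M
    have := hK.finite
    have hKx : IsSMulRegular K x := by
      obtain ⟨F, i, _, _, _, hi, _, _⟩ := hK
      exact (isSMulRegular_of_flat hx F).of_injective i hi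
    exact ((hK.quotSMulTop hMx).hasProjectiveDimensionLE_succ_iff n).mpr
      (ih K hKx ((hK.hasProjectiveDimensionLE_succ_iff n).mp hM))

end ProjectiveDimension

section Regular

open scoped Pointwise

variable {S : Type u} [CommRing S]

theorem spanFinrank_le_spanFinrank_map_quotient_add_one {I : Ideal S} (hI : I.FG) {x : S}
    (hx : x ∈ I) :
    I.spanFinrank ≤ (I.map (Ideal.Quotient.mk (Ideal.span {x}))).spanFinrank + 1 := by
  classical
  obtain ⟨t, htcard, htspan⟩ := Submodule.FG.exists_span_finset_card_eq_spanFinrank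
    (hI.map (Ideal.Quotient.mk (Ideal.span {x})))
  choose l hl using Ideal.Quotient.mk_surjective (I := Ideal.span {x})
  have hmap : (Ideal.span (t.image l : Set S)).map (Ideal.Quotient.mk (Ideal.span {x})) =
      I.map (Ideal.Quotient.mk (Ideal.span {x})) := by
    rw [Ideal.map_span, Finset.coe_image, Set.image_image]
    simpa only [hl, Set.image_id'] using htspan
  have hspan : Ideal.span (insert x (t.image l) : Finset S) = I := by
    have := congrArg (Ideal.comap (Ideal.Quotient.mk (Ideal.span {x}))) hmap
    rwa [Ideal.comap_map_quotientMk, Ideal.comap_map_quotientMk,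
      sup_eq_right.mpr ((Ideal.span_singleton_le_iff_mem I).mpr hx), ← Ideal.span_insert,
      ← Finset.coe_insert] at this
  calc I.spanFinrank ≤ (insert x (t.image l)).card := by
        rw [← Set.ncard_coe_finset]
        conv_lhs => rw [← hspan]
        exact Submodule.spanFinrank_span_le_ncard_of_finite (Finset.finite_toSet _)
    _ ≤ t.card + 1 := (Finset.card_insert_le _ _).trans (Nat.succ_le_succ Finset.card_image_le)
    _ = _ := by rw [htcard]

variable [IsLocalRing S]

theorem isLocalRing_quotient_span_singleton {x : S} (hx : x ∈ maximalIdeal S) :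
    IsLocalRing (S ⧸ Ideal.span {x}) :=
  have : Nontrivial (S ⧸ Ideal.span {x}) := Ideal.Quotient.nontrivial_iff.mpr fun h =>
    hx (Ideal.span_singleton_eq_top.mp h)
  .of_surjective' (Ideal.Quotient.mk _) Ideal.Quotient.mk_surjective

theorem mk_mem_maximalIdeal_iff {I : Ideal S} [IsLocalRing (S ⧸ I)] {y : S} :
    Ideal.Quotient.mk I y ∈ maximalIdeal (S ⧸ I) ↔ y ∈ maximalIdeal S := by
  have : IsLocalHom (Ideal.Quotient.mk I) := .of_surjective _ Ideal.Quotient.mk_surjective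
  rw [← Ideal.mem_comap, maximalIdeal_comap]

theorem exists_linearMap_quotSMulTop_maximalIdeal_apply_eq_one {x : S} (hx : x ∈ maximalIdeal S)
    (hx2 : x ∉ maximalIdeal S ^ 2) [IsLocalRing (S ⧸ Ideal.span {x})] :
    ∃ β : QuotSMulTop x (maximalIdeal S) →ₗ[S ⧸ Ideal.span {x}]
        (S ⧸ Ideal.span {x}) ⧸ maximalIdeal (S ⧸ Ideal.span {x}),
      β (Submodule.Quotient.mk ⟨x, hx⟩) = 1 := by
  obtain ⟨φ, hφ⟩ := exists_linearMap_maximalIdeal_apply_eq_one hx hx2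
  let k := (S ⧸ Ideal.span {x}) ⧸ maximalIdeal (S ⧸ Ideal.span {x})
  have halg (y : S) (hy : y ∈ maximalIdeal S) : algebraMap S k y = 0 :=
    Ideal.Quotient.eq_zero_iff_mem.mpr (mk_mem_maximalIdeal_iff.mpr hy)
  let ψ : S ⧸ maximalIdeal S →ₗ[S] k := (maximalIdeal S).liftQ (Algebra.linearMap S k) halg
  have hψ : ψ 1 = 1 := map_one (algebraMap S k)
  have hker : x • (⊤ : Submodule S (maximalIdeal S)) ≤ LinearMap.ker (ψ ∘ₗ φ) := by
    rintro _ ⟨w, -, rfl⟩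
    change (ψ ∘ₗ φ) (x • w) = 0
    rw [map_smul, Algebra.smul_def, halg x hx, zero_mul]
  refine ⟨LinearMap.extendScalarsOfSurjective Ideal.Quotient.mk_surjective
    (Submodule.liftQ _ (ψ ∘ₗ φ) hker), ?_⟩
  change ψ (φ ⟨x, hx⟩) = 1
  rw [hφ, hψ]

variable [IsNoetherianRing S]

theorem hasProjectiveDimensionLE_residueField_quotient {x : S} (hx : x ∈ maximalIdeal S)
    (hx2 : x ∉ maximalIdeal S ^ 2) (hreg : IsSMulRegular S x) [IsLocalRing (S ⧸ Ideal.span {x})]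
    {n : ℕ} (h : HasProjectiveDimensionLE (ModuleCat.of S (S ⧸ maximalIdeal S)) n) :
    HasProjectiveDimensionLE (ModuleCat.of (S ⧸ Ideal.span {x})
      ((S ⧸ Ideal.span {x}) ⧸ maximalIdeal (S ⧸ Ideal.span {x}))) n := by
  have hm : HasProjectiveDimensionLE (ModuleCat.of S (maximalIdeal S)) n :=
    ((isSyzygy_quotient _).hasProjectiveDimensionLE_succ_iff n).mp
      (hasProjectiveDimensionLT_of_ge _ (n + 1) (n + 2) (by lia))
  have hmx : HasProjectiveDimensionLE
      (ModuleCat.of (S ⧸ Ideal.span {x}) (QuotSMulTop x (maximalIdeal S))) n :=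
    hasProjectiveDimensionLE_quotSMulTop hreg n (ModuleCat.of S (maximalIdeal S))
      (hreg.submodule _ _) hm
  obtain ⟨β, hβ⟩ := exists_linearMap_quotSMulTop_maximalIdeal_apply_eq_one hx hx2
  refine hasProjectiveDimensionLE_quotient_of_apply_eq_one hmx ?_ β hβ
  intro y hy
  obtain ⟨y, rfl⟩ := Ideal.Quotient.mk_surjective y
  refine (Submodule.Quotient.mk_eq_zero _).mpr
    ⟨⟨y, mk_mem_maximalIdeal_iff.mp hy⟩, trivial, Subtype.ext (mul_comm x y)⟩

theorem maximalIdeal_eq_bot_of_le_sq (h : maximalIdeal S ≤ maximalIdeal S ^ 2) :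
    maximalIdeal S = ⊥ := by
  refine Submodule.eq_bot_of_le_smul_of_le_jacobson_bot (maximalIdeal S) (maximalIdeal S)
    (IsNoetherian.noetherian _) ?_ (jacobson_eq_maximalIdeal ⊥ bot_ne_top).ge
  rwa [smul_eq_mul, ← pow_two]

theorem not_maximalIdeal_le_of_mem_associatedPrimes
    (h : ∀ s : S, (∀ y ∈ maximalIdeal S, s * y = 0) → s = 0) {P : Ideal S}
    (hP : P ∈ associatedPrimes S S) : ¬ maximalIdeal S ≤ P := by
  intro hle
  rw [AssociatedPrimes.mem_iff, isAssociatedPrime_iff] at hP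
  obtain ⟨hprime, z, rfl⟩ := hP
  have hz : z = 0 := h z fun y hy => by
    simpa [Submodule.mem_colon_singleton, mul_comm] using hle hy
  exact hprime.ne_top (by simp [hz])

theorem exists_isSMulRegular_notMem_sq
    (h : ∀ s : S, (∀ y ∈ maximalIdeal S, s * y = 0) → s = 0) :
    ∃ x ∈ maximalIdeal S, x ∉ maximalIdeal S ^ 2 ∧ IsSMulRegular S x := by
  classical
  by_contra! hcon
  have hfin := associatedPrimes.finite S S
  have hcover : (maximalIdeal S : Set S) ⊆
      ⋃ P ∈ (insert (maximalIdeal S ^ 2) hfin.toFinset : Finset (Ideal S)), (id P : Ideal S) := by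
    intro x hx
    by_cases hx2 : x ∈ maximalIdeal S ^ 2
    · exact Set.mem_biUnion (by simp) hx2
    · have hzd : x ∈ {r : S | IsSMulRegular S r}ᶜ := hcon x hx hx2
      rw [← biUnion_associatedPrimes_eq_compl_regular] at hzd
      obtain ⟨P, hP, hxP⟩ := Set.mem_iUnion₂.mp hzd
      exact Set.mem_biUnion (x := P) (by simp [hP]) hxP
  have hprime (P : Ideal S) (hP : P ∈ insert (maximalIdeal S ^ 2) hfin.toFinset)
      (hne : P ≠ maximalIdeal S ^ 2) : P.IsPrime :=
    (hfin.mem_toFinset.mp ((Finset.mem_insert.mp hP).resolve_left hne)).isPrime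
  obtain ⟨P, hP, hle⟩ := (Ideal.subset_union_prime (maximalIdeal S ^ 2) (maximalIdeal S ^ 2)
    fun P hP hne _ => hprime P hP hne).mp hcover
  rcases Finset.mem_insert.mp hP with rfl | hP
  · refine one_ne_zero (h 1 fun y hy => ?_)
    rw [one_mul, ← Ideal.mem_bot, ← maximalIdeal_eq_bot_of_le_sq hle]
    exact hy
  · exact not_maximalIdeal_le_of_mem_associatedPrimes h (hfin.mem_toFinset.mp hP) hle

theorem isRegularLocalRing_of_quotient_span_singleton {x : S} (hx : x ∈ maximalIdeal S)
    (hreg : IsSMulRegular S x) [IsRegularLocalRing (S ⧸ Ideal.span {x})] :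
    IsRegularLocalRing S := by
  refine .of_spanFinrank_maximalIdeal_le _ ?_
  rw [← ringKrullDim_quotient_span_singleton_succ_eq_ringKrullDim hreg hx,
    ← (isRegularLocalRing_iff (S ⧸ Ideal.span {x})).mp inferInstance,
    ← map_maximalIdeal_of_surjective (Ideal.Quotient.mk (Ideal.span {x}))
      Ideal.Quotient.mk_surjective]
  exact_mod_cast spanFinrank_le_spanFinrank_map_quotient_add_one (IsNoetherian.noetherian _) hx

end Regular

theorem isRegularLocalRing_of_hasProjectiveDimensionLE (S : Type u) [CommRing S] [IsLocalRing S]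
    [IsNoetherianRing S] {n : ℕ}
    (h : HasProjectiveDimensionLE (ModuleCat.of S (S ⧸ maximalIdeal S)) n) :
    IsRegularLocalRing S := by
  obtain ⟨d, hd⟩ : ∃ d : ℕ, ringKrullDim S < d := by
    obtain ⟨e, he⟩ := ENat.ne_top_iff_exists.mp
      (Ideal.height_ne_top (maximalIdeal.isMaximal S).ne_top)
    refine ⟨e + 1, ?_⟩
    rw [← maximalIdeal_height_eq_ringKrullDim, ← he]
    exact_mod_cast e.lt_succ_self
  induction d generalizing S with
  | zero => exact absurd hd ringKrullDim_nonneg_of_nontrivial.not_gt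
  | succ d ih =>
    by_cases hsocle : ∃ s : S, s ≠ 0 ∧ ∀ y ∈ maximalIdeal S, s * y = 0
    · obtain ⟨s, hs0, hs⟩ := hsocle
      refine .of_spanFinrank_maximalIdeal_le S ?_
      rw [maximalIdeal_eq_bot_of_hasProjectiveDimensionLE hs0 hs h, Submodule.spanFinrank_bot]
      exact ringKrullDim_nonneg_of_nontrivial
    · obtain ⟨x, hx, hx2, hreg⟩ := exists_isSMulRegular_notMem_sq
        fun s hs => by_contra fun hs0 => hsocle ⟨s, hs0, hs⟩
      have := isLocalRing_quotient_span_singleton hx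
      have hdim : ringKrullDim (S ⧸ Ideal.span {x}) < d := by
        rw [← ringKrullDim_quotient_span_singleton_succ_eq_ringKrullDim hreg hx] at hd
        exact lt_of_add_lt_add_right (by exact_mod_cast hd)
      have := ih _ (hasProjectiveDimensionLE_residueField_quotient hx hx2 hreg h) hdim
      exact isRegularLocalRing_of_quotient_span_singleton hx hreg

theorem isRegularLocal_of_isRegularLocalRing (S : Type) [CommRing S] [IsRegularLocalRing S] :
    IsRegularLocal S := by
  obtain ⟨s, hcard, hspan⟩ :=
    (IsNoetherian.noetherian (maximalIdeal S)).exists_span_finset_card_eq_spanFinrank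
  exact ⟨inferInstance, s, hspan, by rw [hcard, (isRegularLocalRing_iff S).mp inferInstance]⟩

theorem nonempty_localizedModule_quotient_equiv {R : Type u} [CommRing R] (p : Ideal R)
    [p.IsPrime] :
    Nonempty (LocalizedModule p.primeCompl (R ⧸ p) ≃ₗ[Localization.AtPrime p]
      Localization.AtPrime p ⧸ maximalIdeal (Localization.AtPrime p)) := by
  have hp : Submodule.localized' (Localization.AtPrime p) p.primeCompl
      (Algebra.linearMap R (Localization.AtPrime p)) p = maximalIdeal (Localization.AtPrime p) :=
    (Ideal.localized'_eq_map _ _ _).trans (Localization.AtPrime.map_eq_maximalIdeal)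
  have e := IsLocalizedModule.linearEquiv p.primeCompl
    (LocalizedModule.mkLinearMap p.primeCompl (R ⧸ p))
    (Submodule.toLocalizedQuotient' (Localization.AtPrime p) p.primeCompl
      (Algebra.linearMap R (Localization.AtPrime p)) p)
  exact ⟨e.extendScalarsOfIsLocalization p.primeCompl (Localization.AtPrime p) ≪≫ₗ
    Submodule.quotEquivOfEq _ _ hp⟩

theorem stmt18_general (R : Type) [CommRing R] [IsNoetherianRing R] [IsLocalRing R]
    (hCM : IsCMLocalRing R) :
    singularLocus R ⊆ PrimeSpectrum.zeroLocus
      (⨅ (M : ModuleCat.{0} R) (_ : MemCM0 R M) (N : ModuleCat.{0} R) (_ : MemCM0 R N),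
        Module.annihilator R (ExtMod R 1 M N) : Ideal R) := by
  intro p hsing a ha
  by_contra hap
  simp only [SetLike.mem_coe, Submodule.mem_iInf] at ha
  obtain ⟨d, L, hL, hfree⟩ := exists_isNthSyzygy_free_localizedAtPrime hCM p.asIdeal hap
    fun M N hM hN => ha M hM N hN
  have hLp : HasProjectiveDimensionLE (localizedAtPrime p.asIdeal L) 0 :=
    (hasProjectiveDimensionLE_zero_iff _).mpr Module.Projective.of_free
  have hRp := (hL.localizedAtPrime p.asIdeal).hasProjectiveDimensionLE hLp
  obtain ⟨e⟩ := nonempty_localizedModule_quotient_equiv p.asIdeal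
  have hk := hasProjectiveDimensionLT_of_iso (LinearEquiv.toModuleIso e) (0 + d + 1)
  have := isRegularLocalRing_of_hasProjectiveDimensionLE _ hk
  exact hsing (isRegularLocal_of_isRegularLocalRing _)

/-- Let `R` be a Cohen-Macaulay noetherian local ring with maximal ideal
`m`. If `⋂_{i>0, M,N ∈ CM₀(R)} Ann Ext^i(M,N)` is `m`-primary, then `R` is an isolated
singularity. -/
theorem stmt18 (R : Type) [CommRing R] [IsNoetherianRing R] [IsLocalRing R]
    (hCM : IsCMLocalRing R)
    (hprim : (⨅ (i : ℕ) (_ : 0 < i) (M : ModuleCat.{0} R) (_ : MemCM0 R M)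
        (N : ModuleCat.{0} R) (_ : MemCM0 R N),
        Module.annihilator R (ExtMod R i M N)).radical = maximalIdeal R) :
    ∀ (p : Ideal R) [p.IsPrime], p ≠ maximalIdeal R →
      IsRegularLocal (Localization.AtPrime p) := by
  intro p hp hpm
  by_contra hsing
  have hle := stmt18_general R hCM (show ⟨p, hp⟩ ∈ singularLocus R from hsing)
  refine hpm (((maximalIdeal.isMaximal R).eq_of_le hp.ne_top ?_).symm)
  rw [← hprim, hp.radical_le_iff]
  exact (iInf₂_le 1 one_pos).trans hle

end
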